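/- arXiv:math/0305184 — 2 statements merged into one kernel-verified Lean document; each statement's English description precedes it below -/
import Mathlib

section
/- Let D ⊆ ℝ² be open, connected and simply connected, and let f : D → ℝ³ be a smooth isothermic immersion (‖f_x‖ = ‖f_y‖ = λ > 0, ⟨f_x, f_y⟩ = 0, f_xy ∈ span{f_x, f_y} on D) with unit normal N = (f_x × f_y)/λ², without umbilic points (⟨N_x, f_x⟩ ≠ 0 everywhere on D), and let f* : D → ℝ³ be a Christoffel dual of f (f*_x = f_x/λ², f*_y = −f_y/λ²). Then f is minimal, i.e. ⟨N_x, f_x⟩ + ⟨N_y, f_y⟩ = 0 on D, if and only if f* is contained in a sphere: there exist c ∈ ℝ³ and ρ > 0 such that ‖f*(p) − c‖ = ρ for all p ∈ D. -/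
open RealInnerProductSpace

/-- The cross product on `ℝ³ = EuclideanSpace ℝ (Fin 3)`. -/
noncomputable def cross3 (u v : EuclideanSpace ℝ (Fin 3)) : EuclideanSpace ℝ (Fin 3) :=
  (WithLp.equiv 2 (Fin 3 → ℝ)).symm
    ![u 1 * v 2 - u 2 * v 1, u 2 * v 0 - u 0 * v 2, u 0 * v 1 - u 1 * v 0]

/-!
The unit normal `N` of `f` is also a unit normal of `f*`, and relative to `f*` minimality of `f`
becomes total umbilicity. The second fundamental forms of `f` and of `f*` are both symmetric, and
as `f*_x`, `f*_y` are multiples of `f_x`, `f_y` of opposite signs, this forces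
`⟪N_x, f_y⟫ = ⟪N_y, f_x⟫ = 0`. Hence, if `f` is minimal, `dN = h df*` with `h = ⟪N_x, f_x⟫`.
Symmetry of the second derivatives of `N` and `f*` then gives `dh ∧ df* = 0`, so `h` is a constant,
and `N - h f*` is constant as well: `f*` lies on a sphere of radius `1 / |h|`.

Conversely, if `f*` lies on a sphere about `c`, then `f* - c = σ N` pointwise, so the second
fundamental forms of `f*` taken with respect to `f* - c` and to `N` agree up to the factor `σ`. This
gives `σ ⟪N_x, f_x⟫ = 1` and `σ ⟪N_y, f_y⟫ = -1`, so `f` is minimal and has no umbilics.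
-/

open Module Topology

section Hypersurface

variable {V : Type*} [NormedAddCommGroup V] [NormedSpace ℝ V] {D : Set V} {p : V}

section Umbilic

variable {E : Type*} [NormedAddCommGroup E] [NormedSpace ℝ E] {N g : V → E} {h : V → ℝ}

lemma fderiv_smul_fderiv_comm (hD : IsOpen D) (hN : ContDiffOn ℝ 2 N D) (hg : ContDiffOn ℝ 2 g D)
    (hh : DifferentiableOn ℝ h D) (hNg : ∀ q ∈ D, fderiv ℝ N q = h q • fderiv ℝ g q)
    (hp : p ∈ D) (v w : V) :
    fderiv ℝ h p v • fderiv ℝ g p w = fderiv ℝ h p w • fderiv ℝ g p v := by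
  have hpD : D ∈ 𝓝 p := hD.mem_nhds hp
  have hg' : DifferentiableAt ℝ (fderiv ℝ g) p :=
    ((hg.fderiv_of_isOpen hD le_rfl).contDiffAt hpD).differentiableAt one_ne_zero
  have second_deriv (v w : V) : fderiv ℝ (fderiv ℝ N) p v w =
      h p • fderiv ℝ (fderiv ℝ g) p v w + fderiv ℝ h p v • fderiv ℝ g p w := by
    have hNg' : fderiv ℝ N =ᶠ[𝓝 p] fun q => h q • fderiv ℝ g q := by
      filter_upwards [hpD] with q hq using hNg q hq
    rw [hNg'.fderiv_eq, fderiv_fun_smul ((hh p hp).differentiableAt hpD) hg']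
    simp
  have hN_symm := (hN.contDiffAt hpD).isSymmSndFDerivAt (by simp) v w
  have hg_symm := (hg.contDiffAt hpD).isSymmSndFDerivAt (by simp) v w
  rwa [second_deriv, second_deriv, hg_symm, add_right_inj] at hN_symm

lemma exists_eq_const_of_fderiv_eq_smul_fderiv (hV : 1 < Module.rank ℝ V) (hD : IsOpen D)
    (hDconn : IsPreconnected D) (hN : ContDiffOn ℝ 2 N D) (hg : ContDiffOn ℝ 2 g D)
    (hinj : ∀ q ∈ D, Function.Injective (fderiv ℝ g q)) (hh : DifferentiableOn ℝ h D)
    (hNg : ∀ q ∈ D, fderiv ℝ N q = h q • fderiv ℝ g q) :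
    ∃ a, ∀ q ∈ D, h q = a := by
  refine hD.exists_is_const_of_fderiv_eq_zero hDconn hh fun q hq => ?_
  ext v
  rcases eq_or_ne v 0 with rfl | hv
  · simp
  obtain ⟨w, hvw⟩ := exists_linearIndependent_pair_of_one_lt_rank hV hv
  have hcomm : fderiv ℝ h q v • w = fderiv ℝ h q w • v := hinj q hq <| by
    simpa only [map_smul] using fderiv_smul_fderiv_comm hD hN hg hh hNg hq v w
  refine (LinearIndependent.pair_iff.1 hvw (-fderiv ℝ h q w) (fderiv ℝ h q v) ?_).2
  rw [hcomm, neg_smul, neg_add_cancel]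

lemma exists_sub_eq_inv_smul_of_fderiv_eq_smul (hD : IsOpen D) (hDconn : IsPreconnected D)
    (hN : DifferentiableOn ℝ N D) (hg : DifferentiableOn ℝ g D) {a : ℝ} (ha : a ≠ 0)
    (hNg : ∀ q ∈ D, fderiv ℝ N q = a • fderiv ℝ g q) :
    ∃ c, ∀ q ∈ D, g q - c = a⁻¹ • N q := by
  obtain ⟨b, hb⟩ := hD.exists_eq_add_of_fderiv_eq hDconn hg (hN.const_smul a⁻¹) fun q hq => by
    rw [fderiv_const_smul ((hN q hq).differentiableAt (hD.mem_nhds hq)), hNg q hq,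
      inv_smul_smul₀ ha]
  exact ⟨b, fun q hq => sub_eq_of_eq_add (hb hq)⟩

end Umbilic

variable {E : Type*} [NormedAddCommGroup E] [InnerProductSpace ℝ E] {N g : V → E}

lemma inner_fderiv_add_inner_fderiv_eq_zero (hD : IsOpen D) {F G : V → E} {r : ℝ}
    (hconst : ∀ q ∈ D, ⟪F q, G q⟫ = r) (hp : p ∈ D) (hF : DifferentiableAt ℝ F p)
    (hG : DifferentiableAt ℝ G p) (v : V) :
    ⟪F p, fderiv ℝ G p v⟫ + ⟪fderiv ℝ F p v, G p⟫ = 0 := by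
  have hev : (fun q => ⟪F q, G q⟫) =ᶠ[𝓝 p] fun _ => r := by
    filter_upwards [hD.mem_nhds hp] with q hq using hconst q hq
  rw [← fderiv_inner_apply ℝ hF hG, hev.fderiv_eq]
  simp

lemma inner_fderiv_eq_zero_of_norm_eq (hD : IsOpen D) {F : V → E} {r : ℝ}
    (hnorm : ∀ q ∈ D, ‖F q‖ = r) (hp : p ∈ D) (hF : DifferentiableAt ℝ F p) (v : V) :
    ⟪F p, fderiv ℝ F p v⟫ = 0 := by
  have h := inner_fderiv_add_inner_fderiv_eq_zero hD (r := r ^ 2)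
    (fun q hq => by rw [real_inner_self_eq_norm_sq, hnorm q hq]) hp hF hF v
  rwa [real_inner_comm, ← two_mul, mul_eq_zero_iff_left two_ne_zero, real_inner_comm] at h

lemma weingarten_equation (hD : IsOpen D) (hg : ContDiffOn ℝ 2 g D)
    (hNg : ∀ q ∈ D, ∀ w, ⟪N q, fderiv ℝ g q w⟫ = 0) (hp : p ∈ D) (hN : DifferentiableAt ℝ N p)
    (v w : V) :
    ⟪fderiv ℝ N p v, fderiv ℝ g p w⟫ = -⟪N p, fderiv ℝ (fderiv ℝ g) p v w⟫ := by
  have hg' : DifferentiableAt ℝ (fderiv ℝ g) p :=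
    ((hg.fderiv_of_isOpen hD le_rfl).contDiffAt (hD.mem_nhds hp)).differentiableAt one_ne_zero
  have h := inner_fderiv_add_inner_fderiv_eq_zero hD (fun q hq => hNg q hq w) hp hN
    (hg'.clm_apply (differentiableAt_const w)) v
  rw [fderiv_clm_apply hg' (differentiableAt_const w)] at h
  exact eq_neg_of_add_eq_zero_right (by simpa using h)

/-- `N` is a `C²` field of unit vectors normal to the (parametrized) submanifold `g` over `D`. -/
structure IsUnitNormalOn (N g : V → E) (D : Set V) : Prop where
  contDiffOn : ContDiffOn ℝ 2 N D
  norm_eq_one : ∀ p ∈ D, ‖N p‖ = 1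
  inner_fderiv_eq_zero : ∀ p ∈ D, ∀ v, ⟪N p, fderiv ℝ g p v⟫ = 0

namespace IsUnitNormalOn

lemma differentiableAt (hN : IsUnitNormalOn N g D) (hD : IsOpen D) (hp : p ∈ D) :
    DifferentiableAt ℝ N p :=
  (hN.contDiffOn.contDiffAt (hD.mem_nhds hp)).differentiableAt two_ne_zero

lemma inner_fderiv_comm (hN : IsUnitNormalOn N g D) (hD : IsOpen D) (hg : ContDiffOn ℝ 2 g D)
    (hp : p ∈ D) (v w : V) :
    ⟪fderiv ℝ N p v, fderiv ℝ g p w⟫ = ⟪fderiv ℝ N p w, fderiv ℝ g p v⟫ := by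
  have hsymm := (hg.contDiffAt (hD.mem_nhds hp)).isSymmSndFDerivAt (by simp) v w
  have weingarten := weingarten_equation hD hg hN.inner_fderiv_eq_zero hp
    (hN.differentiableAt hD hp)
  rw [weingarten, weingarten, hsymm]

lemma eq_inner_smul (hN : IsUnitNormalOn N g D) (hdim : finrank ℝ E = finrank ℝ V + 1)
    (hp : p ∈ D) (hinj : Function.Injective (fderiv ℝ g p)) {w : E}
    (hw : ∀ v, ⟪w, fderiv ℝ g p v⟫ = 0) : w = ⟪w, N p⟫ • N p := by
  have : FiniteDimensional ℝ E := .of_finrank_eq_succ hdim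
  let T : Submodule ℝ E := (fderiv ℝ g p : V →ₗ[ℝ] E).range
  have mem_normal {u : E} (hu : ∀ v, ⟪u, fderiv ℝ g p v⟫ = 0) : u ∈ Tᗮ := by
    rintro - ⟨v, rfl⟩
    rw [real_inner_comm]
    exact hu v
  have hT : finrank ℝ Tᗮ = 1 :=
    Submodule.finrank_add_finrank_orthogonal' (by rw [hdim, LinearMap.finrank_range_of_inj hinj])
  have hN0 : (⟨N p, mem_normal (hN.inner_fderiv_eq_zero p hp)⟩ : Tᗮ) ≠ 0 :=
    ne_of_apply_ne Subtype.val (norm_ne_zero_iff.1 (by simp [hN.norm_eq_one p hp]))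
  obtain ⟨σ, hσ⟩ := (finrank_eq_one_iff_of_nonzero' _ hN0).1 hT ⟨w, mem_normal hw⟩
  obtain rfl : σ • N p = w := congrArg Subtype.val hσ
  rw [inner_smul_left, real_inner_self_eq_norm_sq, hN.norm_eq_one p hp]
  simp

lemma smul_inner_fderiv_eq_of_sphere (hN : IsUnitNormalOn N g D) (hD : IsOpen D)
    (hdim : finrank ℝ E = finrank ℝ V + 1) (hg : ContDiffOn ℝ 2 g D) (hp : p ∈ D)
    (hinj : Function.Injective (fderiv ℝ g p)) {c : E} {ρ : ℝ}
    (hsphere : ∀ q ∈ D, ‖g q - c‖ = ρ) :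
    ∃ σ : ℝ, ∀ v w, σ * ⟪fderiv ℝ N p v, fderiv ℝ g p w⟫ = ⟪fderiv ℝ g p v, fderiv ℝ g p w⟫ := by
  have hdiff : ∀ q ∈ D, DifferentiableAt ℝ (fun q => g q - c) q := fun q hq =>
    ((hg.contDiffAt (hD.mem_nhds hq)).differentiableAt two_ne_zero).sub_const c
  have hnormal : ∀ q ∈ D, ∀ w, ⟪g q - c, fderiv ℝ g q w⟫ = 0 := fun q hq w => by
    simpa only [fderiv_sub_const]
      using inner_fderiv_eq_zero_of_norm_eq hD hsphere hq (hdiff q hq) w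
  refine ⟨⟪g p - c, N p⟫, fun v w => ?_⟩
  have hN_form := weingarten_equation hD hg hN.inner_fderiv_eq_zero hp
    (hN.differentiableAt hD hp) v w
  have hg_form := weingarten_equation hD hg hnormal hp (hdiff p hp) v w
  rw [hN.eq_inner_smul hdim hp hinj (hnormal p hp), fderiv_sub_const, inner_smul_left] at hg_form
  rw [hN_form, hg_form, mul_neg]
  simp

end IsUnitNormalOn

end Hypersurface

section Plane

lemma clm_apply_eq_smul_add_smul {F : Type*} [NormedAddCommGroup F] [NormedSpace ℝ F]
    (L : ℝ × ℝ →L[ℝ] F) (v : ℝ × ℝ) : L v = v.1 • L (1, 0) + v.2 • L (0, 1) := by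
  rw [← map_smul, ← map_smul, ← map_add]
  simp

lemma contDiffOn_succ_of_partials {F : Type*} [NormedAddCommGroup F] [NormedSpace ℝ F]
    {D : Set (ℝ × ℝ)} {g : ℝ × ℝ → F} {n : ℕ} (hD : IsOpen D) (hg : DifferentiableOn ℝ g D)
    (hgx : ContDiffOn ℝ n (fun p => fderiv ℝ g p (1, 0)) D)
    (hgy : ContDiffOn ℝ n (fun p => fderiv ℝ g p (0, 1)) D) : ContDiffOn ℝ (n + 1) g D := by
  refine (contDiffOn_succ_iff_fderiv_of_isOpen hD).2
    ⟨hg, by simp, contDiffOn_clm_apply.2 fun v => ?_⟩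
  exact ((hgx.const_smul v.1).add (hgy.const_smul v.2)).congr
    fun p _ => clm_apply_eq_smul_add_smul _ v

variable {E : Type*} [NormedAddCommGroup E] [InnerProductSpace ℝ E]
  {D : Set (ℝ × ℝ)} {f N fstar : ℝ × ℝ → E} {p : ℝ × ℝ}

/-- `f` is a conformal immersion over the plane domain `D`; it is of class `C³`, so that its normals
can be `C²`. -/
structure IsConformalImmersionOn (f : ℝ × ℝ → E) (D : Set (ℝ × ℝ)) : Prop where
  contDiffOn : ContDiffOn ℝ 3 f D
  norm_eq : ∀ p ∈ D, ‖fderiv ℝ f p (1, 0)‖ = ‖fderiv ℝ f p (0, 1)‖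
  norm_pos : ∀ p ∈ D, 0 < ‖fderiv ℝ f p (1, 0)‖
  inner_eq_zero : ∀ p ∈ D, ⟪fderiv ℝ f p (1, 0), fderiv ℝ f p (0, 1)⟫ = 0

/-- `fstar` is a Christoffel dual of the conformal immersion `f` over `D`. Both partial derivatives
of `f` have the same length, and each equation is scaled by the length occurring in it. -/
structure IsChristoffelDualOn (fstar f : ℝ × ℝ → E) (D : Set (ℝ × ℝ)) : Prop where
  differentiableAt : ∀ p ∈ D, DifferentiableAt ℝ fstar p
  fderiv_fst : ∀ p ∈ D,
    fderiv ℝ fstar p (1, 0) = (‖fderiv ℝ f p (1, 0)‖ ^ 2)⁻¹ • fderiv ℝ f p (1, 0)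
  fderiv_snd : ∀ p ∈ D,
    fderiv ℝ fstar p (0, 1) = -((‖fderiv ℝ f p (0, 1)‖ ^ 2)⁻¹ • fderiv ℝ f p (0, 1))

namespace IsConformalImmersionOn

lemma contDiffOn_fderiv_apply (hf : IsConformalImmersionOn f D) (hD : IsOpen D) (v : ℝ × ℝ) :
    ContDiffOn ℝ 2 (fun p => fderiv ℝ f p v) D :=
  (hf.contDiffOn.fderiv_of_isOpen hD (by norm_num)).clm_apply contDiffOn_const

lemma injective_fderiv (hf : IsConformalImmersionOn f D) (hp : p ∈ D) :
    Function.Injective (fderiv ℝ f p) := by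
  refine (injective_iff_map_eq_zero _).2 fun v hv => ?_
  have hpos := hf.norm_pos p hp
  have hnorm : ‖fderiv ℝ f p v‖ ^ 2 = (v.1 ^ 2 + v.2 ^ 2) * ‖fderiv ℝ f p (1, 0)‖ ^ 2 := by
    rw [clm_apply_eq_smul_add_smul (fderiv ℝ f p) v, norm_add_sq_real, inner_smul_left,
      inner_smul_right, hf.inner_eq_zero p hp, norm_smul, norm_smul, ← hf.norm_eq p hp,
      mul_pow, mul_pow, Real.norm_eq_abs, Real.norm_eq_abs, sq_abs, sq_abs]
    simp only [mul_zero, add_zero]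
    ring
  have hv0 : v.1 ^ 2 + v.2 ^ 2 = 0 := by
    simpa [hv, hpos.ne'] using hnorm
  obtain ⟨h₁, h₂⟩ := (add_eq_zero_iff_of_nonneg (sq_nonneg v.1) (sq_nonneg v.2)).1 hv0
  exact Prod.ext (eq_zero_of_pow_eq_zero h₁) (eq_zero_of_pow_eq_zero h₂)

end IsConformalImmersionOn

namespace IsChristoffelDualOn

lemma isConformalImmersionOn (hdual : IsChristoffelDualOn fstar f D)
    (hf : IsConformalImmersionOn f D) (hD : IsOpen D) : IsConformalImmersionOn fstar D where
  contDiffOn := by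
    have hinv_sq : ∀ v, (∀ p ∈ D, 0 < ‖fderiv ℝ f p v‖) →
        ContDiffOn ℝ 2 (fun p => (‖fderiv ℝ f p v‖ ^ 2)⁻¹ • fderiv ℝ f p v) D := fun v hv =>
      (((hf.contDiffOn_fderiv_apply hD v).norm_sq ℝ).inv fun p hp => (pow_pos (hv p hp) 2).ne').smul
        (hf.contDiffOn_fderiv_apply hD v)
    have h := contDiffOn_succ_of_partials (n := 2) hD
      (fun p hp => (hdual.differentiableAt p hp).differentiableWithinAt)
      ((hinv_sq _ hf.norm_pos).congr hdual.fderiv_fst)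
      ((hinv_sq _ fun p hp => hf.norm_eq p hp ▸ hf.norm_pos p hp).neg.congr hdual.fderiv_snd)
    exact h.of_le (by norm_num)
  norm_eq p hp := by
    rw [hdual.fderiv_fst p hp, hdual.fderiv_snd p hp, norm_neg, norm_smul, norm_smul,
      hf.norm_eq p hp]
  norm_pos p hp := by
    have hpos := hf.norm_pos p hp
    rw [hdual.fderiv_fst p hp]
    exact norm_pos_iff.2 (smul_ne_zero (by positivity) (norm_pos_iff.1 hpos))
  inner_eq_zero p hp := by
    simp [hdual.fderiv_fst p hp, hdual.fderiv_snd p hp, inner_smul_left, inner_smul_right,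
      hf.inner_eq_zero p hp]

lemma isUnitNormalOn (hdual : IsChristoffelDualOn fstar f D) (hN : IsUnitNormalOn N f D) :
    IsUnitNormalOn N fstar D where
  contDiffOn := hN.contDiffOn
  norm_eq_one := hN.norm_eq_one
  inner_fderiv_eq_zero p hp v := by
    rw [clm_apply_eq_smul_add_smul, hdual.fderiv_fst p hp, hdual.fderiv_snd p hp]
    simp [inner_add_right, inner_smul_right, hN.inner_fderiv_eq_zero p hp]

lemma inner_fderiv_fst (hdual : IsChristoffelDualOn fstar f D) (hf : IsConformalImmersionOn f D)
    (hp : p ∈ D) (w : E) :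
    ⟪w, fderiv ℝ f p (1, 0)⟫ =
      ‖fderiv ℝ f p (1, 0)‖ ^ 2 * ⟪w, fderiv ℝ fstar p (1, 0)⟫ := by
  rw [hdual.fderiv_fst p hp, inner_smul_right,
    mul_inv_cancel_left₀ (pow_pos (hf.norm_pos p hp) 2).ne']

lemma inner_fderiv_snd (hdual : IsChristoffelDualOn fstar f D) (hf : IsConformalImmersionOn f D)
    (hp : p ∈ D) (w : E) :
    ⟪w, fderiv ℝ f p (0, 1)⟫ =
      -(‖fderiv ℝ f p (1, 0)‖ ^ 2 * ⟪w, fderiv ℝ fstar p (0, 1)⟫) := by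
  rw [hdual.fderiv_snd p hp, inner_neg_right, inner_smul_right, ← hf.norm_eq p hp, mul_neg,
    mul_inv_cancel_left₀ (pow_pos (hf.norm_pos p hp) 2).ne', neg_neg]

lemma inner_fderiv_normal_eq_zero (hdual : IsChristoffelDualOn fstar f D)
    (hf : IsConformalImmersionOn f D) (hN : IsUnitNormalOn N f D) (hD : IsOpen D) (hp : p ∈ D) :
    ⟪fderiv ℝ N p (1, 0), fderiv ℝ f p (0, 1)⟫ = 0 ∧
      ⟪fderiv ℝ N p (0, 1), fderiv ℝ f p (1, 0)⟫ = 0 := by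
  have hf_symm := hN.inner_fderiv_comm hD (hf.contDiffOn.of_le (by norm_num)) hp (1, 0) (0, 1)
  have hdual_symm := (hdual.isUnitNormalOn hN).inner_fderiv_comm hD
    ((hdual.isConformalImmersionOn hf hD).contDiffOn.of_le (by norm_num)) hp (1, 0) (0, 1)
  have hneg : ⟪fderiv ℝ N p (1, 0), fderiv ℝ f p (0, 1)⟫ =
      -⟪fderiv ℝ N p (0, 1), fderiv ℝ f p (1, 0)⟫ := by
    rw [hdual.inner_fderiv_snd hf hp, hdual.inner_fderiv_fst hf hp, hdual_symm]
  constructor <;> linarith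

lemma inner_fderiv_fderiv (hdual : IsChristoffelDualOn fstar f D)
    (hf : IsConformalImmersionOn f D) (hp : p ∈ D) (v w : ℝ × ℝ) :
    ⟪fderiv ℝ fstar p v, fderiv ℝ f p w⟫ = v.1 * w.1 - v.2 * w.2 := by
  have horth := hf.inner_eq_zero p hp
  have hne := (hf.norm_pos p hp).ne'
  rw [clm_apply_eq_smul_add_smul (fderiv ℝ fstar p) v,
    clm_apply_eq_smul_add_smul (fderiv ℝ f p) w, hdual.fderiv_fst p hp, hdual.fderiv_snd p hp,
    ← hf.norm_eq p hp]
  simp only [inner_add_left, inner_add_right, inner_smul_left, inner_smul_right, inner_neg_left,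
    smul_neg, inner_neg_right, real_inner_self_eq_norm_sq, real_inner_comm (fderiv ℝ f p (1, 0)),
    horth, ← hf.norm_eq p hp, conj_trivial]
  field_simp
  ring

lemma inner_fderiv_normal (hdual : IsChristoffelDualOn fstar f D)
    (hf : IsConformalImmersionOn f D) (hN : IsUnitNormalOn N f D) (hD : IsOpen D) (hp : p ∈ D)
    (v w : ℝ × ℝ) :
    ⟪fderiv ℝ N p v, fderiv ℝ f p w⟫ =
      v.1 * w.1 * ⟪fderiv ℝ N p (1, 0), fderiv ℝ f p (1, 0)⟫ +
        v.2 * w.2 * ⟪fderiv ℝ N p (0, 1), fderiv ℝ f p (0, 1)⟫ := by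
  obtain ⟨hxy, hyx⟩ := hdual.inner_fderiv_normal_eq_zero hf hN hD hp
  rw [clm_apply_eq_smul_add_smul (fderiv ℝ N p) v, clm_apply_eq_smul_add_smul (fderiv ℝ f p) w]
  simp only [inner_add_left, inner_add_right, inner_smul_left, inner_smul_right, hxy, hyx,
    conj_trivial]
  ring

lemma fderiv_normal_eq_smul (hdual : IsChristoffelDualOn fstar f D)
    (hf : IsConformalImmersionOn f D) (hN : IsUnitNormalOn N f D) (hE : finrank ℝ E = 3)
    (hD : IsOpen D) (hp : p ∈ D)
    (hmin : ⟪fderiv ℝ N p (1, 0), fderiv ℝ f p (1, 0)⟫ +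
      ⟪fderiv ℝ N p (0, 1), fderiv ℝ f p (0, 1)⟫ = 0) :
    fderiv ℝ N p = ⟪fderiv ℝ N p (1, 0), fderiv ℝ f p (1, 0)⟫ • fderiv ℝ fstar p := by
  set h := ⟪fderiv ℝ N p (1, 0), fderiv ℝ f p (1, 0)⟫
  refine ContinuousLinearMap.ext fun v => ?_
  have htangent (w : ℝ × ℝ) :
      ⟪fderiv ℝ N p v - h • fderiv ℝ fstar p v, fderiv ℝ f p w⟫ = 0 := by
    rw [inner_sub_left, inner_smul_left, hdual.inner_fderiv_normal hf hN hD hp,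
      hdual.inner_fderiv_fderiv hf hp, conj_trivial]
    linear_combination v.2 * w.2 * hmin
  have hnormal : ⟪fderiv ℝ N p v - h • fderiv ℝ fstar p v, N p⟫ = 0 := by
    rw [real_inner_comm, inner_sub_right, inner_smul_right,
      inner_fderiv_eq_zero_of_norm_eq hD hN.norm_eq_one hp (hN.differentiableAt hD hp),
      (hdual.isUnitNormalOn hN).inner_fderiv_eq_zero p hp, mul_zero, sub_zero]
  have hzero := hN.eq_inner_smul (by simp [hE]) hp (hf.injective_fderiv hp) htangent
  rw [hnormal, zero_smul] at hzero
  exact sub_eq_zero.1 hzero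

lemma exists_sphere_of_minimal (hdual : IsChristoffelDualOn fstar f D)
    (hf : IsConformalImmersionOn f D) (hN : IsUnitNormalOn N f D) (hE : finrank ℝ E = 3)
    (hD : IsOpen D) (hDconn : IsPreconnected D)
    (hmin : ∀ p ∈ D, ⟪fderiv ℝ N p (1, 0), fderiv ℝ f p (1, 0)⟫ +
      ⟪fderiv ℝ N p (0, 1), fderiv ℝ f p (0, 1)⟫ = 0)
    (hp : p ∈ D) (humb : ⟪fderiv ℝ N p (1, 0), fderiv ℝ f p (1, 0)⟫ ≠ 0) :
    ∃ (c : E) (ρ : ℝ), 0 < ρ ∧ ∀ q ∈ D, ‖fstar q - c‖ = ρ := by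
  have hdual_conf := hdual.isConformalImmersionOn hf hD
  have hdual_smooth : ContDiffOn ℝ 2 fstar D := hdual_conf.contDiffOn.of_le (by norm_num)
  have hshape : ∀ q ∈ D, fderiv ℝ N q =
      ⟪fderiv ℝ N q (1, 0), fderiv ℝ f q (1, 0)⟫ • fderiv ℝ fstar q := fun q hq =>
    hdual.fderiv_normal_eq_smul hf hN hE hD hq (hmin q hq)
  have hdiff : DifferentiableOn ℝ
      (fun q => ⟪fderiv ℝ N q (1, 0), fderiv ℝ f q (1, 0)⟫) D :=
    (((hN.contDiffOn.fderiv_of_isOpen hD le_rfl).clm_apply contDiffOn_const).differentiableOn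
      one_ne_zero).inner ℝ ((hf.contDiffOn_fderiv_apply hD _).differentiableOn two_ne_zero)
  obtain ⟨a, ha⟩ := exists_eq_const_of_fderiv_eq_smul_fderiv (by norm_num) hD hDconn
    hN.contDiffOn hdual_smooth (fun q hq => hdual_conf.injective_fderiv hq) hdiff hshape
  have ha0 : a ≠ 0 := ha p hp ▸ humb
  obtain ⟨c, hc⟩ := exists_sub_eq_inv_smul_of_fderiv_eq_smul hD hDconn
    (hN.contDiffOn.differentiableOn two_ne_zero) (hdual_smooth.differentiableOn two_ne_zero) ha0
    fun q hq => by rw [← ha q hq]; exact hshape q hq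
  refine ⟨c, |a|⁻¹, by positivity, fun q hq => ?_⟩
  rw [hc q hq, norm_smul, hN.norm_eq_one q hq, norm_inv, Real.norm_eq_abs, mul_one]

lemma minimal_and_not_umbilic_of_sphere (hdual : IsChristoffelDualOn fstar f D)
    (hf : IsConformalImmersionOn f D) (hN : IsUnitNormalOn N f D) (hE : finrank ℝ E = 3)
    (hD : IsOpen D) {c : E} {ρ : ℝ} (hsphere : ∀ q ∈ D, ‖fstar q - c‖ = ρ) (hp : p ∈ D) :
    ⟪fderiv ℝ N p (1, 0), fderiv ℝ f p (1, 0)⟫ +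
        ⟪fderiv ℝ N p (0, 1), fderiv ℝ f p (0, 1)⟫ = 0 ∧
      ⟪fderiv ℝ N p (1, 0), fderiv ℝ f p (1, 0)⟫ ≠ 0 := by
  have hdual_conf := hdual.isConformalImmersionOn hf hD
  obtain ⟨σ, hσ⟩ := (hdual.isUnitNormalOn hN).smul_inner_fderiv_eq_of_sphere hD (by simp [hE])
    (hdual_conf.contDiffOn.of_le (by norm_num)) hp (hdual_conf.injective_fderiv hp) hsphere
  have hx : σ * ⟪fderiv ℝ N p (1, 0), fderiv ℝ f p (1, 0)⟫ = 1 := by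
    rw [hdual.inner_fderiv_fst hf hp, mul_left_comm, hσ, ← hdual.inner_fderiv_fst hf hp,
      hdual.inner_fderiv_fderiv hf hp]
    norm_num
  have hy : σ * ⟪fderiv ℝ N p (0, 1), fderiv ℝ f p (0, 1)⟫ = -1 := by
    rw [hdual.inner_fderiv_snd hf hp, mul_neg, mul_left_comm, hσ, ← hdual.inner_fderiv_snd hf hp,
      hdual.inner_fderiv_fderiv hf hp]
    norm_num
  refine ⟨?_, right_ne_zero_of_mul_eq_one hx⟩
  refine (mul_eq_zero_iff_left (left_ne_zero_of_mul_eq_one hx)).1 ?_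
  rw [mul_add, hx, hy, add_neg_cancel]

end IsChristoffelDualOn

end Plane

section CrossProduct

variable (u v : EuclideanSpace ℝ (Fin 3))

lemma inner_cross3_left : ⟪u, cross3 u v⟫ = 0 := by
  rw [EuclideanSpace.inner_eq_star_dotProduct, dotProduct_comm]
  exact dot_self_cross u.ofLp v.ofLp

lemma inner_cross3_right : ⟪v, cross3 u v⟫ = 0 := by
  rw [EuclideanSpace.inner_eq_star_dotProduct, dotProduct_comm]
  exact dot_cross_self u.ofLp v.ofLp

lemma norm_cross3_sq : ‖cross3 u v‖ ^ 2 = ‖u‖ ^ 2 * ‖v‖ ^ 2 - ⟪u, v⟫ ^ 2 := by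
  have h := cross_dot_cross u.ofLp v.ofLp u.ofLp v.ofLp
  rw [dotProduct_comm v.ofLp u.ofLp, ← sq, dotProduct_comm u.ofLp v.ofLp] at h
  rw [← real_inner_self_eq_norm_sq, ← real_inner_self_eq_norm_sq, ← real_inner_self_eq_norm_sq]
  exact h

lemma norm_cross3_of_orthogonal {u v : EuclideanSpace ℝ (Fin 3)} (huv : ⟪u, v⟫ = 0) :
    ‖cross3 u v‖ = ‖u‖ * ‖v‖ := by
  rw [← sq_eq_sq₀ (by positivity) (by positivity), norm_cross3_sq, huv]
  ring

lemma contDiffOn_cross3 {V : Type*} [NormedAddCommGroup V] [NormedSpace ℝ V] {D : Set V}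
    {F G : V → EuclideanSpace ℝ (Fin 3)} {n : WithTop ℕ∞} (hF : ContDiffOn ℝ n F D)
    (hG : ContDiffOn ℝ n G D) : ContDiffOn ℝ n (fun p => cross3 (F p) (G p)) D := by
  have hF' := contDiffOn_euclidean.1 hF
  have hG' := contDiffOn_euclidean.1 hG
  refine contDiffOn_euclidean.2 fun i => ?_
  fin_cases i
  · exact ((hF' 1).mul (hG' 2)).sub ((hF' 2).mul (hG' 1))
  · exact ((hF' 2).mul (hG' 0)).sub ((hF' 0).mul (hG' 2))
  · exact ((hF' 0).mul (hG' 1)).sub ((hF' 1).mul (hG' 0))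

lemma IsConformalImmersionOn.isUnitNormalOn_cross3 {D : Set (ℝ × ℝ)}
    {f N : ℝ × ℝ → EuclideanSpace ℝ (Fin 3)} (hf : IsConformalImmersionOn f D) (hD : IsOpen D)
    (hN : ∀ p ∈ D, N p = (‖fderiv ℝ f p (1, 0)‖ ^ 2)⁻¹ •
      cross3 (fderiv ℝ f p (1, 0)) (fderiv ℝ f p (0, 1))) : IsUnitNormalOn N f D where
  contDiffOn := by
    have hfx := hf.contDiffOn_fderiv_apply hD (1, 0)
    refine (ContDiffOn.fun_smul ?_ ?_).congr hN
    · exact (hfx.norm_sq ℝ).inv fun p hp => (pow_pos (hf.norm_pos p hp) 2).ne'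
    · exact contDiffOn_cross3 hfx (hf.contDiffOn_fderiv_apply hD (0, 1))
  norm_eq_one p hp := by
    have hpos := hf.norm_pos p hp
    rw [hN p hp, norm_smul, norm_cross3_of_orthogonal (hf.inner_eq_zero p hp), ← hf.norm_eq p hp,
      norm_inv, norm_pow, norm_norm, ← sq, inv_mul_cancel₀ (by positivity)]
  inner_fderiv_eq_zero p hp v := by
    rw [hN p hp, clm_apply_eq_smul_add_smul (fderiv ℝ f p) v, real_inner_comm]
    simp [inner_add_left, inner_smul_left, inner_smul_right, inner_cross3_left, inner_cross3_right]

end CrossProduct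

theorem minimal_iff_christoffel_dual_in_sphere_general {E : Type*} [NormedAddCommGroup E]
    [InnerProductSpace ℝ E] (hE : finrank ℝ E = 3) {D : Set (ℝ × ℝ)} (hD : IsOpen D)
    (hDconn : IsConnected D) {f N fstar : ℝ × ℝ → E} (hf : IsConformalImmersionOn f D)
    (hN : IsUnitNormalOn N f D) (hdual : IsChristoffelDualOn fstar f D) :
    ((∀ p ∈ D, ⟪fderiv ℝ N p (1, 0), fderiv ℝ f p (1, 0)⟫ +
          ⟪fderiv ℝ N p (0, 1), fderiv ℝ f p (0, 1)⟫ = 0) ∧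
        ∀ p ∈ D, ⟪fderiv ℝ N p (1, 0), fderiv ℝ f p (1, 0)⟫ ≠ 0) ↔
      ∃ (c : E) (ρ : ℝ), 0 < ρ ∧ ∀ p ∈ D, ‖fstar p - c‖ = ρ := by
  constructor
  · rintro ⟨hmin, humb⟩
    obtain ⟨p, hp⟩ := hDconn.nonempty
    exact hdual.exists_sphere_of_minimal hf hN hE hD hDconn.isPreconnected hmin hp (humb p hp)
  · rintro ⟨c, ρ, -, hsphere⟩
    have h := fun p hp => hdual.minimal_and_not_umbilic_of_sphere (p := p) hf hN hE hD hsphere hp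
    exact ⟨fun p hp => (h p hp).1, fun p hp => (h p hp).2⟩

/-- **Christoffel's characterization of minimal surfaces among isothermic surfaces.**
Let `D ⊆ ℝ²` be open, connected and simply connected, `f : D → ℝ³` a smooth
isothermic immersion without umbilic points, with unit normal
`N = (f_x × f_y)/λ²` (`λ = ‖f_x‖ = ‖f_y‖ > 0`), and let `f*` be a Christoffel
dual of `f` (`f*_x = f_x/λ²`, `f*_y = −f_y/λ²`).  Then `f` is minimal
(`⟪N_x,f_x⟫ + ⟪N_y,f_y⟫ = 0` on `D`) if and only if `f*` is contained in a
sphere. -/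
theorem minimal_iff_christoffel_dual_in_sphere
    (D : Set (ℝ × ℝ)) (hD : IsOpen D) (hDconn : IsConnected D)
    (hDsc : SimplyConnectedSpace D)
    (f : ℝ × ℝ → EuclideanSpace ℝ (Fin 3))
    (hf : ContDiffOn ℝ (⊤ : ℕ∞) f D)
    (fx fy : ℝ × ℝ → EuclideanSpace ℝ (Fin 3))
    (hfx : ∀ p, fx p = fderiv ℝ f p (1, 0))
    (hfy : ∀ p, fy p = fderiv ℝ f p (0, 1))
    (hnorm : ∀ p ∈ D, ‖fx p‖ = ‖fy p‖)
    (hpos : ∀ p ∈ D, 0 < ‖fx p‖)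
    (horth : ∀ p ∈ D, ⟪fx p, fy p⟫ = 0)
    (hspan : ∀ p ∈ D, fderiv ℝ fx p (0, 1) ∈ Submodule.span ℝ {fx p, fy p})
    -- the unit normal `N = (f_x × f_y)/λ²`
    (N : ℝ × ℝ → EuclideanSpace ℝ (Fin 3))
    (hN : ∀ p ∈ D, N p = (‖fx p‖ ^ 2)⁻¹ • cross3 (fx p) (fy p))
    -- no umbilic points
    (humb : ∀ p ∈ D, ⟪fderiv ℝ N p (1, 0), fx p⟫ ≠ 0)
    -- `f*` is a Christoffel dual of `f`
    (fstar : ℝ × ℝ → EuclideanSpace ℝ (Fin 3))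
    (hstardiff : ∀ p ∈ D, DifferentiableAt ℝ fstar p)
    (hstarx : ∀ p ∈ D, fderiv ℝ fstar p (1, 0) = (‖fx p‖ ^ 2)⁻¹ • fx p)
    (hstary : ∀ p ∈ D, fderiv ℝ fstar p (0, 1) = -((‖fy p‖ ^ 2)⁻¹ • fy p)) :
    ((∀ p ∈ D, ⟪fderiv ℝ N p (1, 0), fx p⟫ + ⟪fderiv ℝ N p (0, 1), fy p⟫ = 0) ↔
      (∃ (c : EuclideanSpace ℝ (Fin 3)) (ρ : ℝ), 0 < ρ ∧
        ∀ p ∈ D, ‖fstar p - c‖ = ρ)) := by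
  obtain rfl : fx = fun p => fderiv ℝ f p (1, 0) := funext hfx
  obtain rfl : fy = fun p => fderiv ℝ f p (0, 1) := funext hfy
  have hconf : IsConformalImmersionOn f D := ⟨contDiffOn_infty.1 hf 3, hnorm, hpos, horth⟩
  have h := minimal_iff_christoffel_dual_in_sphere_general finrank_euclideanSpace_fin hD hDconn
    hconf (hconf.isUnitNormalOn_cross3 hD hN) ⟨hstardiff, hstarx, hstary⟩
  exact ⟨fun hmin => h.1 ⟨hmin, humb⟩, fun hsphere => (h.2 hsphere).1⟩
end

section
/- Let V be a finite set, G a finite simple graph on V with edge set E, and Φ : V → ℝ. Define F : ℝ → ℝ by F(x) = ∫_{−∞}^x arctan(eᵘ) du, and define S : (V → ℝ) → ℝ by S(ρ) = Σ_{{j,k}∈E} [F(ρ_k − ρ_j) + F(ρ_j − ρ_k) − F(ρ_j + ρ_k) − F(−ρ_j − ρ_k) − π(ρ_j + ρ_k)] + Σ_{j∈V} Φ(j) ρ_j. Then for every ρ : V → ℝ and every direction w : V → ℝ, the function t ↦ S(ρ + t·w) is twice differentiable and its second derivative at t = 0 equals Σ_{{j,k}∈E} [ (w_k − w_j)²/cosh(ρ_k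 − ρ_j) − (w_k + w_j)²/cosh(ρ_k + ρ_j) ]. -/
/-!
Put `H x = F x + F (-x)`. Since `F' = arctan ∘ exp` and
`arctan (eˣ) - arctan (e⁻ˣ) = arctan (sinh x)`, the derivative of `H` is the Gudermannian function
`arctan ∘ sinh`, whose derivative is `1 / cosh`. The contribution of an edge `{j, k}` to `S` is
`H (ρ k - ρ j) - H (ρ k + ρ j) - π (ρ k + ρ j)`, so its second derivative in the direction `w` is
given by the chain rule; the vertex terms `Φ j * ρ j` are linear in `ρ`.
-/

open MeasureTheory

/-- `F(x) = ∫_{−∞}^x arctan(eᵘ) du` (equal to `Im Li₂(i eˣ)`). -/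
noncomputable def Fint (x : ℝ) : ℝ := ∫ u in Set.Iio x, Real.arctan (Real.exp u)

/-- The variational functional `S` for orthogonal circle patterns in the sphere. -/
noncomputable def circlePatternFunctional {V : Type*} [Fintype V] [DecidableEq V]
    (G : SimpleGraph V) [DecidableRel G.Adj] (Φ : V → ℝ) (ρ : V → ℝ) : ℝ :=
  (∑ e ∈ G.edgeFinset,
    Sym2.lift ⟨fun j k =>
      Fint (ρ k - ρ j) + Fint (ρ j - ρ k) - Fint (ρ j + ρ k) - Fint (-ρ j - ρ k)
        - Real.pi * (ρ j + ρ k),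
      fun j k => by ring_nf⟩ e)
  + ∑ j, Φ j * ρ j

open Set Filter Topology

lemma hasDerivAt_integral_Iio {E : Type*} [NormedAddCommGroup E] [NormedSpace ℝ E]
    [CompleteSpace E] {f : ℝ → E} {x b : ℝ} (hf : IntegrableOn f (Iic b)) (hxb : x < b)
    (hfx : ContinuousAt f x) : HasDerivAt (fun y => ∫ u in Iio y, f u) (f x) x := by
  have h_interval : IntervalIntegrable f volume b x :=
    ((intervalIntegrable_iff_integrableOn_Ioc_of_le hxb.le).2
      (hf.mono_set Ioc_subset_Iic_self)).symm
  have h_split : (fun y => ∫ u in Iio y, f u) =ᶠ[𝓝 x]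
      fun y => (∫ u in Iic b, f u) + ∫ u in b..y, f u := by
    filter_upwards [Iio_mem_nhds hxb] with y hy
    rw [← intervalIntegral.integral_Iic_sub_Iic hf
      (hf.mono_set (Iic_subset_Iic.2 (le_of_lt hy))), add_sub_cancel, integral_Iic_eq_integral_Iio]
  exact ((intervalIntegral.integral_hasDerivAt_right h_interval
    ⟨Iic b, Iic_mem_nhds hxb, hf.aestronglyMeasurable⟩ hfx).const_add _).congr_of_eventuallyEq
    h_split

lemma arctan_le_self {x : ℝ} (hx : 0 ≤ x) : Real.arctan x ≤ x := by
  simpa only [Real.tan_arctan] using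
    Real.le_tan (Real.arctan_nonneg.2 hx) (Real.arctan_lt_pi_div_two x)

lemma continuous_arctan_exp : Continuous fun u : ℝ => Real.arctan (Real.exp u) :=
  Real.continuous_arctan.comp Real.continuous_exp

lemma integrableOn_arctan_exp_Iic (b : ℝ) :
    IntegrableOn (fun u => Real.arctan (Real.exp u)) (Iic b) := by
  refine (integrableOn_exp_Iic b).mono' continuous_arctan_exp.aestronglyMeasurable
    (Eventually.of_forall fun u => ?_)
  rw [Real.norm_of_nonneg (Real.arctan_nonneg.2 (Real.exp_nonneg u))]
  exact arctan_le_self (Real.exp_nonneg u)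

lemma hasDerivAt_Fint (x : ℝ) : HasDerivAt Fint (Real.arctan (Real.exp x)) x :=
  hasDerivAt_integral_Iio (integrableOn_arctan_exp_Iic (x + 1)) (lt_add_one x)
    continuous_arctan_exp.continuousAt

lemma arctan_exp_sub_arctan_exp_neg (x : ℝ) :
    Real.arctan (Real.exp x) - Real.arctan (Real.exp (-x)) = Real.arctan (Real.sinh x) := by
  have h_mul : Real.exp x * -Real.exp (-x) = -1 := by
    rw [mul_neg, ← Real.exp_add, add_neg_cancel, Real.exp_zero]
  rw [sub_eq_add_neg, ← Real.arctan_neg, Real.arctan_add (by rw [h_mul]; norm_num), h_mul,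
    Real.sinh_eq]
  norm_num [sub_eq_add_neg]

lemma hasDerivAt_arctan_sinh (x : ℝ) :
    HasDerivAt (fun y => Real.arctan (Real.sinh y)) (1 / Real.cosh x) x := by
  refine (Real.hasDerivAt_sinh x).arctan.congr_deriv ?_
  have h_cosh : Real.cosh x ≠ 0 := (Real.cosh_pos x).ne'
  rw [add_comm, ← Real.cosh_sq]
  field_simp

/-- The even function `H x = F x + F (-x)`, through which every edge term of the functional `S`
depends on the function `F = Fint`. -/
noncomputable def evenFint (x : ℝ) : ℝ := Fint x + Fint (-x)

lemma evenFint_neg (x : ℝ) : evenFint (-x) = evenFint x := by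
  rw [evenFint, evenFint, neg_neg, add_comm]

lemma hasDerivAt_evenFint (x : ℝ) : HasDerivAt evenFint (Real.arctan (Real.sinh x)) x := by
  refine ((hasDerivAt_Fint x).add ((hasDerivAt_Fint (-x)).comp x (hasDerivAt_neg x))).congr_deriv ?_
  rw [mul_neg_one, ← sub_eq_add_neg, arctan_exp_sub_arctan_exp_neg]

namespace circlePatternFunctional

section Edge

variable {V : Type*}

/-- The contribution of an edge `{j, k}` to the functional `S`. -/
noncomputable def edgeEnergy (ρ : V → ℝ) : Sym2 V → ℝ :=
  Sym2.lift ⟨fun j k => evenFint (ρ k - ρ j) - evenFint (ρ k + ρ j) - Real.pi * (ρ k + ρ j),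
    fun j k => by
      beta_reduce
      rw [← neg_sub (ρ k) (ρ j), evenFint_neg, add_comm (ρ j)]⟩

/-- The differential of `edgeEnergy` at `ρ`, evaluated on the direction `w`. -/
noncomputable def edgeDifferential (ρ w : V → ℝ) : Sym2 V → ℝ :=
  Sym2.lift ⟨fun j k => Real.arctan (Real.sinh (ρ k - ρ j)) * (w k - w j)
      - Real.arctan (Real.sinh (ρ k + ρ j)) * (w k + w j) - Real.pi * (w k + w j),
    fun j k => by
      beta_reduce
      rw [← neg_sub (ρ k) (ρ j), Real.sinh_neg, Real.arctan_neg, ← neg_sub (w k) (w j),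
        neg_mul_neg, add_comm (ρ j), add_comm (w j)]⟩

/-- The Hessian quadratic form of `edgeEnergy` at `ρ`, evaluated on the direction `w`. -/
noncomputable def edgeHessian (ρ w : V → ℝ) : Sym2 V → ℝ :=
  Sym2.lift ⟨fun j k =>
      (w k - w j) ^ 2 / Real.cosh (ρ k - ρ j) - (w k + w j) ^ 2 / Real.cosh (ρ k + ρ j),
    fun j k => by
      beta_reduce
      rw [← neg_sub (ρ k) (ρ j), Real.cosh_neg, ← neg_sub (w k) (w j), neg_sq, add_comm (ρ j),
        add_comm (w j)]⟩

variable {c : ℝ → V → ℝ} {v : V → ℝ} {t : ℝ}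

lemma hasDerivAt_edgeEnergy (hc : ∀ j, HasDerivAt (c · j) (v j) t) (e : Sym2 V) :
    HasDerivAt (fun s => edgeEnergy (c s) e) (edgeDifferential (c t) v e) t := by
  induction e using Sym2.ind with
  | _ j k =>
    have h_diff := (hc k).sub (hc j)
    have h_sum := (hc k).add (hc j)
    exact (((hasDerivAt_evenFint _).comp t h_diff).sub
      ((hasDerivAt_evenFint _).comp t h_sum)).sub (h_sum.const_mul Real.pi)

lemma hasDerivAt_edgeDifferential (hc : ∀ j, HasDerivAt (c · j) (v j) t) (e : Sym2 V) :
    HasDerivAt (fun s => edgeDifferential (c s) v e) (edgeHessian (c t) v e) t := by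
  induction e using Sym2.ind with
  | _ j k =>
    have h_diff := (hc k).sub (hc j)
    have h_sum := (hc k).add (hc j)
    have h_sub := ((hasDerivAt_arctan_sinh _).comp t h_diff).mul_const (v k - v j)
    have h_add := ((hasDerivAt_arctan_sinh _).comp t h_sum).mul_const (v k + v j)
    refine ((h_sub.sub h_add).sub_const (Real.pi * (v k + v j))).congr_deriv ?_
    simp only [edgeHessian, Sym2.lift_mk, Pi.sub_apply, Pi.add_apply]
    ring

end Edge

variable {V : Type*} [Fintype V] (G : SimpleGraph V) [DecidableRel G.Adj] (Φ : V → ℝ)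

/-- The differential of the functional `S` at `ρ`, evaluated on the direction `w`. -/
noncomputable def differential (ρ w : V → ℝ) : ℝ :=
  ∑ e ∈ G.edgeFinset, edgeDifferential ρ w e + ∑ j, Φ j * w j

variable {c : ℝ → V → ℝ} {v : V → ℝ} {t : ℝ}

lemma hasDerivAt_differential_comp (hc : ∀ j, HasDerivAt (c · j) (v j) t) :
    HasDerivAt (fun s => differential G Φ (c s) v) (∑ e ∈ G.edgeFinset, edgeHessian (c t) v e) t :=
  (HasDerivAt.fun_sum fun e _ => hasDerivAt_edgeDifferential hc e).add_const _

variable [DecidableEq V]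

lemma eq_sum_edgeEnergy (ρ : V → ℝ) :
    circlePatternFunctional G Φ ρ = ∑ e ∈ G.edgeFinset, edgeEnergy ρ e + ∑ j, Φ j * ρ j := by
  refine congrArg (· + _) (Finset.sum_congr rfl fun e _ => ?_)
  induction e using Sym2.ind with
  | _ j k =>
    simp only [edgeEnergy, evenFint, Sym2.lift_mk]
    ring_nf

lemma hasDerivAt_comp (hc : ∀ j, HasDerivAt (c · j) (v j) t) :
    HasDerivAt (fun s => circlePatternFunctional G Φ (c s)) (differential G Φ (c t) v) t := by
  simp only [eq_sum_edgeEnergy]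
  exact (HasDerivAt.fun_sum fun e _ => hasDerivAt_edgeEnergy hc e).add
    (HasDerivAt.fun_sum fun j _ => (hc j).const_mul (Φ j))

end circlePatternFunctional

/-- **The Hessian of the spherical circle pattern functional.**
For every `ρ` and every direction `w`, the function `t ↦ S(ρ + t w)` is twice
differentiable, and its second derivative at `t = 0` equals
`∑_{{j,k} ∈ E} [(w_k − w_j)²/cosh(ρ_k − ρ_j) − (w_k + w_j)²/cosh(ρ_k + ρ_j)]`. -/
theorem circlePatternFunctional_second_deriv
    {V : Type*} [Fintype V] [DecidableEq V]
    (G : SimpleGraph V) [DecidableRel G.Adj] (Φ : V → ℝ)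
    (ρ w : V → ℝ) :
    Differentiable ℝ (fun t : ℝ => circlePatternFunctional G Φ (ρ + t • w)) ∧
    Differentiable ℝ (deriv (fun t : ℝ => circlePatternFunctional G Φ (ρ + t • w))) ∧
    deriv (deriv (fun t : ℝ => circlePatternFunctional G Φ (ρ + t • w))) 0 =
      ∑ e ∈ G.edgeFinset,
        Sym2.lift ⟨fun j k =>
          (w k - w j) ^ 2 / Real.cosh (ρ k - ρ j) - (w k + w j) ^ 2 / Real.cosh (ρ k + ρ j),
          fun j k => by simp only [Real.cosh_sub]; ring_nf⟩ e := by
  have h_line (t : ℝ) (j : V) : HasDerivAt (fun s : ℝ => (ρ + s • w) j) (w j) t := by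
    simpa using ((hasDerivAt_id t).mul_const (w j)).const_add (ρ j)
  have h_first (t : ℝ) := circlePatternFunctional.hasDerivAt_comp G Φ (h_line t)
  have h_second (t : ℝ) := circlePatternFunctional.hasDerivAt_differential_comp G Φ (h_line t)
  have h_deriv : deriv (fun t : ℝ => circlePatternFunctional G Φ (ρ + t • w)) =
      fun t => circlePatternFunctional.differential G Φ (ρ + t • w) w :=
    funext fun t => (h_first t).deriv
  refine ⟨fun t => (h_first t).differentiableAt, ?_, ?_⟩
  · rw [h_deriv]
    exact fun t => (h_second t).differentiableAt
  · rw [h_deriv, (h_second 0).deriv, zero_smul, add_zero]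
    rfl
end
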